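/- As n → ∞, (1/n) ∑_{j=1}^{n} log(j) · log(n+1−j) = log²(n) − 2 log(n) + 2 − π²/6 + o(1). -/

import Mathlib

open Real Filter

lemma aux_riemann (f : ℝ → ℝ) (hf : Continuous f) :
    Tendsto (fun n : ℕ => (1 / ((n : ℝ) + 1)) * ∑ j ∈ Finset.range (n + 1), f (j / ((n : ℝ) + 1)))
      atTop (nhds (∫ x in (0:ℝ)..1, f x)) := by
  rw [Metric.tendsto_atTop]
  intro ε hε
  have huc : UniformContinuousOn f (Set.Icc 0 1) :=
    isCompact_Icc.uniformContinuousOn_of_continuous hf.continuousOn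
  rw [Metric.uniformContinuousOn_iff] at huc
  obtain ⟨δ, hδ, h⟩ := huc (ε / 2) (by positivity)
  obtain ⟨K, hK⟩ := exists_nat_one_div_lt hδ
  refine ⟨K, fun n hn => ?_⟩
  have hN : (0 : ℝ) < (n : ℝ) + 1 := by positivity
  have hnδ : 1 / ((n : ℝ) + 1) < δ := by
    refine lt_of_le_of_lt ?_ hK
    gcongr
  have hsum := intervalIntegral.sum_integral_adjacent_intervals (f := f)
    (μ := MeasureTheory.volume) (a := fun j : ℕ => (j : ℝ) / ((n : ℝ) + 1)) (n := n + 1)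
    (fun k _ => hf.intervalIntegrable _ _)
  have e1 : ((n + 1 : ℕ) : ℝ) / ((n : ℝ) + 1) = 1 := by push_cast; field_simp
  simp only [e1, Nat.cast_zero, zero_div] at hsum
  rw [← hsum, Finset.mul_sum, dist_eq_norm, ← Finset.sum_sub_distrib]
  have key : ∀ j ∈ Finset.range (n + 1),
      ‖1 / ((n : ℝ) + 1) * f (j / ((n : ℝ) + 1)) -
        ∫ x in ((j : ℕ) : ℝ) / ((n : ℝ) + 1)..((j + 1 : ℕ) : ℝ) / ((n : ℝ) + 1), f x‖
        ≤ ε / 2 * (1 / ((n : ℝ) + 1)) := by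
    intro j hj
    have hj' : (j : ℝ) + 1 ≤ (n : ℝ) + 1 := by
      have := Finset.mem_range.1 hj
      exact_mod_cast this
    have hlen : ((j + 1 : ℕ) : ℝ) / ((n : ℝ) + 1) - (j : ℝ) / ((n : ℝ) + 1)
        = 1 / ((n : ℝ) + 1) := by push_cast; ring
    have hle : (j : ℝ) / ((n : ℝ) + 1) ≤ ((j + 1 : ℕ) : ℝ) / ((n : ℝ) + 1) := by
      push_cast; gcongr; linarith
    have h0 : 0 ≤ (j : ℝ) / ((n : ℝ) + 1) := by positivity
    have h1 : ((j + 1 : ℕ) : ℝ) / ((n : ℝ) + 1) ≤ 1 := by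
      push_cast; rw [div_le_one hN]; exact hj'
    have hc : 1 / ((n : ℝ) + 1) * f (j / ((n : ℝ) + 1)) =
        ∫ x in ((j : ℕ) : ℝ) / ((n : ℝ) + 1)..((j + 1 : ℕ) : ℝ) / ((n : ℝ) + 1),
          f (j / ((n : ℝ) + 1)) := by
      rw [intervalIntegral.integral_const, hlen, smul_eq_mul]
    rw [hc, ← intervalIntegral.integral_sub (by simp) (hf.intervalIntegrable _ _)]
    refine (intervalIntegral.norm_integral_le_of_norm_le_const (C := ε / 2) ?_).trans ?_
    · intro x hx
      rw [Set.uIoc_of_le hle] at hx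
      rw [← dist_eq_norm]
      refine (h _ ⟨h0, hle.trans h1⟩ _ ⟨h0.trans hx.1.le, hx.2.trans h1⟩ ?_).le
      rw [dist_comm, Real.dist_eq, abs_of_nonneg (by linarith [hx.1])]
      linarith [hx.2]
    · rw [hlen, abs_of_nonneg (by positivity)]
  refine ((norm_sum_le _ _).trans (Finset.sum_le_sum key)).trans_lt ?_
  rw [Finset.sum_const, Finset.card_range, nsmul_eq_mul]
  push_cast
  field_simp
  linarith

lemma aux_cont0 : ContinuousAt (fun x : ℝ => log x * log (1 - x)) 0 := by
  have hd : DifferentiableAt ℝ (fun x : ℝ => log (1 - x)) 0 := by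
    apply DifferentiableAt.log
    · fun_prop
    · norm_num
  have h := (Real.continuous_mul_log.continuousAt (x := 0)).mul (continuousAt_dslope_same.2 hd)
  convert! h using 1
  funext x
  have := sub_smul_dslope (fun x : ℝ => log (1 - x)) 0 x
  simp at this
  simp only [Pi.mul_apply]
  rw [← this]; ring

lemma aux_cont : Continuous (fun x : ℝ => log x * log (1 - x)) := by
  rw [continuous_iff_continuousAt]
  intro x
  by_cases h0 : x = 0
  · subst h0; exact aux_cont0
  by_cases h1 : x = 1
  · subst h1
    have h : ContinuousAt ((fun x : ℝ => log x * log (1 - x)) ∘ (fun x : ℝ => 1 - x)) 1 := by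
      apply ContinuousAt.comp
      · simpa using aux_cont0
      · fun_prop
    convert! h using 1
    funext x
    simp [mul_comm]
  · apply ContinuousAt.mul
    · exact continuousAt_log h0
    · apply ContinuousAt.log
      · fun_prop
      · intro h; apply h1; linarith

lemma aux_F_cont (k : ℕ) : Continuous (fun x : ℝ => -log x * (x ^ (k + 1) / ((k : ℝ) + 1))) := by
  have : Continuous (fun x : ℝ => (x * log x) * (-(x ^ k / ((k : ℝ) + 1)))) :=
    Real.continuous_mul_log.mul (by fun_prop)
  convert! this using 1
  funext x; ring

lemma aux_F_int (k : ℕ) : ∫ x in (0:ℝ)..1, -log x * (x ^ (k + 1) / ((k : ℝ) + 1)) =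
    1 / (((k : ℝ) + 1) * ((k : ℝ) + 2) ^ 2) := by
  have hk1 : (k : ℝ) + 1 ≠ 0 := by positivity
  have hk2 : (k : ℝ) + 2 ≠ 0 := by positivity
  rw [intervalIntegral.integral_eq_sub_of_hasDerivAt_of_le (a := 0) (b := 1) zero_le_one
    (f := fun x : ℝ => (1 / ((k : ℝ) + 1)) * (x ^ (k + 2) / ((k : ℝ) + 2) ^ 2
      - (x * log x) * x ^ (k + 1) / ((k : ℝ) + 2)))]
  · simp
    field_simp
  · apply Continuous.continuousOn
    have := Real.continuous_mul_log
    fun_prop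
  · intro x hx
    have hx0 : x ≠ 0 := hx.1.ne'
    have h1 := (hasDerivAt_pow (k + 2) x).div_const (((k : ℝ) + 2) ^ 2)
    have h2 := (((Real.hasDerivAt_mul_log hx0).mul (hasDerivAt_pow (k + 1) x)).div_const
      ((k : ℝ) + 2))
    convert! (h1.sub h2).const_mul (1 / ((k : ℝ) + 1)) using 1
    push_cast
    field_simp
    ring
  · exact (aux_F_cont k).intervalIntegrable _ _

lemma aux_sum : HasSum (fun k : ℕ => 1 / (((k : ℝ) + 1) * ((k : ℝ) + 2) ^ 2)) (2 - π ^ 2 / 6) := by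
  have h1 : HasSum (fun k : ℕ => 1 / ((k : ℝ) + 1) - 1 / ((k : ℝ) + 2)) 1 := by
    rw [hasSum_iff_tendsto_nat_of_nonneg]
    · have : ∀ n : ℕ, ∑ k ∈ Finset.range n, (1 / ((k : ℝ) + 1) - 1 / ((k : ℝ) + 2)) =
          1 - 1 / ((n : ℝ) + 1) := by
        intro n
        induction n with
        | zero => simp
        | succ n ih => rw [Finset.sum_range_succ, ih]; push_cast; ring
      simp_rw [this]
      simpa using (tendsto_one_div_add_atTop_nhds_zero_nat (𝕜 := ℝ)).const_sub 1
    · intro k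
      rw [sub_nonneg]
      gcongr
      norm_num
  have h2 : HasSum (fun k : ℕ => 1 / ((k : ℝ) + 2) ^ 2) (π ^ 2 / 6 - 1) := by
    have := (hasSum_nat_add_iff' 2).2 hasSum_zeta_two
    simpa [Finset.sum_range_succ] using this
  convert! h1.sub h2 using 1
  · funext k
    field_simp
    ring
  · ring

lemma aux_int : ∫ x in (0:ℝ)..1, log x * log (1 - x) = 2 - π ^ 2 / 6 := by
  have hS : ∀ x ∈ Set.uIoc (0:ℝ) 1,
      HasSum (fun k : ℕ => -log x * (x ^ (k + 1) / ((k : ℝ) + 1))) (log x * log (1 - x)) := by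
    intro x hx
    rw [Set.uIoc_of_le zero_le_one] at hx
    rcases hx.2.eq_or_lt with rfl | h
    · simp [hasSum_zero]
    · have := (hasSum_pow_div_log_of_abs_lt_one (x := x)
        (by rw [abs_of_pos hx.1]; exact h)).mul_left (-log x)
      simpa using this
  have h := intervalIntegral.hasSum_integral_of_dominated_convergence
    (μ := MeasureTheory.volume) (a := 0) (b := 1)
    (F := fun (k : ℕ) (x : ℝ) => -log x * (x ^ (k + 1) / ((k : ℝ) + 1)))
    (f := fun x => log x * log (1 - x))
    (fun k x => -log x * (x ^ (k + 1) / ((k : ℝ) + 1)))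
    (fun k => (aux_F_cont k).aestronglyMeasurable)
    (fun k => Eventually.of_forall fun x hx => by
      rw [Set.uIoc_of_le zero_le_one] at hx
      have h1 := Real.log_nonpos hx.1.le hx.2
      have h2 := hx.1
      rw [Real.norm_of_nonneg]
      have : 0 ≤ -log x := by linarith
      positivity)
    (Eventually.of_forall fun x hx => (hS x hx).summable)
    (by
      refine (aux_cont.intervalIntegrable 0 1).congr ?_
      intro x hx
      exact (hS x hx).tsum_eq.symm)
    (Eventually.of_forall fun x hx => hS x hx)
  simp_rw [aux_F_int] at h
  exact h.unique aux_sum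

theorem avg_log_mul_log :
    Tendsto (fun n : ℕ =>
        (1 / (n : ℝ)) * ∑ j ∈ Finset.Icc 1 n, Real.log j * Real.log ((n : ℝ) + 1 - j) -
          ((Real.log n) ^ 2 - 2 * Real.log n + 2 - π ^ 2 / 6))
      atTop (nhds 0) := by
  have hR := aux_riemann _ aux_cont
  rw [aux_int] at hR
  -- the ratio (n+1)/n
  have hq : Tendsto (fun n : ℕ => 1 + 1 / (n : ℝ)) atTop (nhds 1) := by
    simpa using (tendsto_one_div_atTop_nhds_zero_nat (𝕜 := ℝ)).const_add 1
  have hT := hq.mul hR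
  -- d = log (n+1) - log n
  have hd : Tendsto (fun n : ℕ => log (1 + 1 / (n : ℝ))) atTop (nhds 0) := by
    simpa using hq.log one_ne_zero
  have hp : ∀ m : ℕ, Tendsto (fun n : ℕ => log (n : ℝ) ^ m / (n : ℝ)) atTop (nhds 0) := by
    intro m
    have := (Real.tendsto_pow_log_div_mul_add_atTop 1 0 m one_ne_zero).comp
      (tendsto_natCast_atTop_atTop (R := ℝ))
    simpa [Function.comp_def] using this
  have hc : Tendsto (fun n : ℕ => log (Stirling.stirlingSeq n) + log 2 / 2) atTop
      (nhds (log (√π) + log 2 / 2)) :=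
    (Stirling.tendsto_stirlingSeq_sqrt_pi.log (by positivity)).add_const _
  have hr : Tendsto (fun n : ℕ => (log (Stirling.stirlingSeq n) + log 2 / 2) * (log n ^ 0 / n)
      + 1 / 2 * (log n ^ 1 / n)) atTop (nhds 0) := by
    have := (hc.mul (hp 0)).add ((hp 1).const_mul (1 / 2))
    rwa [mul_zero, mul_zero, add_zero] at this
  have hlr : Tendsto (fun n : ℕ => (log (Stirling.stirlingSeq n) + log 2 / 2) * (log n ^ 1 / n)
      + 1 / 2 * (log n ^ 2 / n)) atTop (nhds 0) := by
    have := (hc.mul (hp 1)).add ((hp 2).const_mul (1 / 2))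
    rwa [mul_zero, mul_zero, add_zero] at this
  have hall := ((((hT.sub_const (2 - π ^ 2 / 6)).add (hlr.const_mul 2)).add
    ((hd.mul hr).const_mul 2)).sub (hd.pow 2)).sub (hd.const_mul 2)
  have hz : 1 * (2 - π ^ 2 / 6) - (2 - π ^ 2 / 6) + 2 * 0 + 2 * (0 * 0) - 0 ^ 2 - 2 * 0 = (0 : ℝ) := by
    ring
  rw [hz] at hall
  refine hall.congr' ?_
  filter_upwards [eventually_ge_atTop 1] with n hn
  have hn0 : (0 : ℝ) < n := by exact_mod_cast hn
  have hN : (0 : ℝ) < (n : ℝ) + 1 := by positivity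
  have hdl : log (1 + 1 / (n : ℝ)) = log ((n : ℝ) + 1) - log n := by
    rw [← Real.log_div hN.ne' hn0.ne']; congr 1; field_simp
  have hfac : ∑ j ∈ Finset.Icc 1 n, log (j : ℝ) = log (n.factorial : ℝ) := by
    clear hn hn0 hN hdl
    induction n with
    | zero => simp
    | succ n ih =>
      rw [Finset.sum_Icc_succ_top (by omega), ih, Nat.factorial_succ, Nat.cast_mul,
        Real.log_mul (by positivity) (by positivity), add_comm]
  have hrefl : ∑ j ∈ Finset.Icc 1 n, log ((n : ℝ) + 1 - j) = log (n.factorial : ℝ) := by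
    rw [← hfac]
    refine Finset.sum_bij' (fun j _ => n + 1 - j) (fun j _ => n + 1 - j) ?_ ?_ ?_ ?_ ?_
    · intro j hj; simp only [Finset.mem_Icc] at *; omega
    · intro j hj; simp only [Finset.mem_Icc] at *; omega
    · intro j hj; simp only [Finset.mem_Icc] at *; omega
    · intro j hj; simp only [Finset.mem_Icc] at *; omega
    · intro j hj
      simp only [Finset.mem_Icc] at hj
      rw [Nat.cast_sub (by omega)]; push_cast; rfl
  have hst := Stirling.log_stirlingSeq_formula n
  rw [Real.log_mul (by norm_num) hn0.ne', Real.log_div hn0.ne' (by positivity), Real.log_exp] at hst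
  have hsum : ∑ j ∈ Finset.range (n + 1),
      log ((j : ℝ) / ((n : ℝ) + 1)) * log (1 - (j : ℝ) / ((n : ℝ) + 1)) =
      ∑ j ∈ Finset.Icc 1 n, log (j : ℝ) * log ((n : ℝ) + 1 - j)
        - 2 * log ((n : ℝ) + 1) * log (n.factorial : ℝ) + n * log ((n : ℝ) + 1) ^ 2 := by
    have e : ∑ j ∈ Finset.range (n + 1),
      log ((j : ℝ) / ((n : ℝ) + 1)) * log (1 - (j : ℝ) / ((n : ℝ) + 1)) =
      ∑ j ∈ Finset.Icc 1 n, (log (j : ℝ) * log ((n : ℝ) + 1 - j)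
        - log ((n : ℝ) + 1) * log (j : ℝ) - log ((n : ℝ) + 1) * log ((n : ℝ) + 1 - j)
        + log ((n : ℝ) + 1) ^ 2) := by
      rw [Finset.range_eq_Ico, Finset.sum_eq_sum_Ico_succ_bot (by omega)]
      simp only [Nat.cast_zero, zero_div, log_zero, zero_mul, zero_add]
      refine Finset.sum_congr (by ext j; simp only [Finset.mem_Ico, Finset.mem_Icc]; omega) ?_
      intro j hj
      rw [Finset.mem_Icc] at hj
      have hj1 : (1 : ℝ) ≤ j := by exact_mod_cast hj.1
      have hj2 : (j : ℝ) ≤ n := by exact_mod_cast hj.2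
      have : 1 - (j : ℝ) / ((n : ℝ) + 1) = ((n : ℝ) + 1 - j) / ((n : ℝ) + 1) := by field_simp
      rw [this, Real.log_div (by linarith) hN.ne', Real.log_div (by linarith) hN.ne']
      ring
    rw [e, Finset.sum_add_distrib, Finset.sum_sub_distrib, Finset.sum_sub_distrib,
      ← Finset.mul_sum, ← Finset.mul_sum, hfac, hrefl, Finset.sum_const, Nat.card_Icc]
    simp
    ring
  rw [hsum, hdl, hst]
  generalize ∑ j ∈ Finset.Icc 1 n, log (j : ℝ) * log ((n : ℝ) + 1 - j) = S
  generalize log (n.factorial : ℝ) = G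
  generalize log ((n : ℝ) + 1) = L
  generalize log (n : ℝ) = l
  field_simp
  ring
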